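/- The eigenspace Λ²₁₄ = {α : ⋆(φ₀ ∧ α) = α} coincides with the kernel of the map α ↦ (⋆φ₀) ∧ α from Λ²(ℝ⁷)* to Λ⁶(ℝ⁷)*. -/

import Mathlib

open scoped RealInnerProductSpace
open Finset

noncomputable section

/-- ℝ⁷ with its standard inner product. -/
abbrev E7 := EuclideanSpace ℝ (Fin 7)

/-- standard orthonormal basis vectors e₁,…,e₇ (0-indexed). -/
def e (i : Fin 7) : E7 := EuclideanSpace.single i 1

/-- the 3×3 minor ε^{abc}(x,y,z) (a determinant of components). -/
def tdet (a b c : Fin 7) (x y z : E7) : ℝ :=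
  Matrix.det !![x a, x b, x c; y a, y b, y c; z a, z b, z c]

/-- the standard G₂ 3-form φ₀ = ε¹²³ + ε¹∧(ε⁴⁵−ε⁶⁷) + ε²∧(ε⁴⁶−ε⁷⁵) + ε³∧(ε⁴⁷−ε⁵⁶),
with indices shifted to be 0-based. -/
def phi0 (x y z : E7) : ℝ :=
  tdet 0 1 2 x y z + (tdet 0 3 4 x y z - tdet 0 5 6 x y z)
    + (tdet 1 3 5 x y z - tdet 1 6 4 x y z)
    + (tdet 2 3 6 x y z - tdet 2 4 5 x y z)

/-- the cross product on ℝ⁷: the unique vector with ⟨x × y, z⟩ = φ₀(x,y,z). -/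
def cross (x y : E7) : E7 := (WithLp.equiv 2 _).symm (fun i => phi0 x y (e i))

/-- components of φ₀ in the standard basis. -/
def phi0c (i j k : Fin 7) : ℝ := phi0 (e i) (e j) (e k)

/-- a function `Fin 7 → Fin 7 → ℝ` represents a 2-form (resp. 2-vector) by its
components iff it is antisymmetric. -/
def Alt2 (α : Fin 7 → Fin 7 → ℝ) : Prop := ∀ i j, α j i = - α i j

/-- components of the basis 2-form εⁱ∧εʲ. -/
def bf (i j a b : Fin 7) : ℝ :=
  (if a = i ∧ b = j then (1:ℝ) else 0) - (if a = j ∧ b = i then (1:ℝ) else 0)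

/-- The operator L(α) = ⋆(φ₀ ∧ α) on 2-forms, expressed in components:
(L α)_{ij} is the coefficient of the volume form in the 7-form φ₀ ∧ α ∧ εⁱ∧εʲ,
i.e. ⟨L α, γ⟩ vol = φ₀ ∧ α ∧ γ for all 2-forms γ. -/
def Lop (α : Fin 7 → Fin 7 → ℝ) (i j : Fin 7) : ℝ :=
  (1/24) * ∑ σ : Equiv.Perm (Fin 7),
    ((Equiv.Perm.sign σ : ℤ) : ℝ) * phi0c (σ 0) (σ 1) (σ 2) * α (σ 3) (σ 4) * bf i j (σ 5) (σ 6)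

/-- Kronecker delta on indices. -/
def ind (p q : Fin 7) : ℝ := if p = q then 1 else 0

/-- components of the basis 4-form εⁱ∧εʲ∧εᵏ∧εˡ. -/
def bf4 (i j k l a b c d : Fin 7) : ℝ :=
  Matrix.det !![ind i a, ind i b, ind i c, ind i d;
                ind j a, ind j b, ind j c, ind j d;
                ind k a, ind k b, ind k c, ind k d;
                ind l a, ind l b, ind l c, ind l d]

/-- components of the 4-form ⋆φ₀: (⋆φ₀)_{ijkl} is the coefficient of the volume
form in φ₀ ∧ εⁱ∧εʲ∧εᵏ∧εˡ. -/
def psic (i j k l : Fin 7) : ℝ :=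
  (1/144) * ∑ σ : Equiv.Perm (Fin 7),
    ((Equiv.Perm.sign σ : ℤ) : ℝ) * phi0c (σ 0) (σ 1) (σ 2) * bf4 i j k l (σ 3) (σ 4) (σ 5) (σ 6)

/-- the 6-form (⋆φ₀) ∧ α evaluated on a 6-tuple of basis vectors. -/
def starPhiWedge (α : Fin 7 → Fin 7 → ℝ) (a : Fin 6 → Fin 7) : ℝ :=
  ∑ σ : Equiv.Perm (Fin 6),
    ((Equiv.Perm.sign σ : ℤ) : ℝ) * psic (a (σ 0)) (a (σ 1)) (a (σ 2)) (a (σ 3))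
      * α (a (σ 4)) (a (σ 5))

/-
Both conditions say that the contraction `c = ½ ∑ φ₀(·, i, j) α(i, j)` vanishes. The components of
`⋆φ₀` can be computed in two ways: as those of `φ₀` on the three complementary indices, up to sign,
and as `δᵢₖδⱼₗ - δᵢₗδⱼₖ - ∑ₘ φₘᵢⱼφₘₖₗ`. Since `L α` is the contraction of `⋆φ₀` with `α`, the second
formula gives `L α = α - ∑ₘ cₘ φ₀(m, ·, ·)`, and the forms `φ₀(m, ·, ·)` are linearly independent.
By the first formula, `⋆φ₀ ∧ α` evaluated on all basis vectors but the `k`-th is a nonzero multiple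
of `cₖ`.
-/

section Counting

variable {κ ι R : Type*} [Fintype κ] [Fintype ι] [DecidableEq ι] [CommSemiring R]

-- The left side does not depend on `g`, since `Perm ι` permutes the embeddings transitively;
-- averaging it over all `g` gives the right side.
theorem descFactorial_mul_sum_perm_comp (F : (κ ↪ ι) → R) (g : κ ↪ ι) :
    (Fintype.card ι).descFactorial (Fintype.card κ)
        * ∑ σ : Equiv.Perm ι, F (g.trans σ.toEmbedding)
      = (Fintype.card ι).factorial * ∑ f, F f := by
  have hindep (f : κ ↪ ι) : ∑ σ : Equiv.Perm ι, F (f.trans σ.toEmbedding)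
      = ∑ σ : Equiv.Perm ι, F (g.trans σ.toEmbedding) := by
    obtain ⟨ρ, hρ⟩ := Equiv.Perm.exists_extending_pair f g f.injective g.injective
    rw [← Equiv.sum_comp (Equiv.mulRight ρ) fun σ => F (f.trans σ.toEmbedding)]
    refine Finset.sum_congr rfl fun σ _ => congrArg F ?_
    ext k
    simp [hρ]
  have hbij (σ : Equiv.Perm ι) : ∑ f : κ ↪ ι, F (f.trans σ.toEmbedding) = ∑ f, F f :=
    Equiv.sum_comp (Equiv.embeddingCongr (Equiv.refl κ) σ) F
  calc _ = ∑ f : κ ↪ ι, ∑ σ : Equiv.Perm ι, F (f.trans σ.toEmbedding) := by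
        simp only [hindep, Finset.sum_const, Finset.card_univ, Fintype.card_embedding_eq,
          nsmul_eq_mul]
    _ = _ := by
        rw [Finset.sum_comm]
        simp only [hbij, Finset.sum_const, Finset.card_univ, Fintype.card_perm, nsmul_eq_mul]

theorem sum_perm_comp_embedding [DecidableEq κ] [CharZero R] [IsLeftCancelMulZero R]
    {F : (κ → ι) → R} (hF : ∀ b, ¬ Function.Injective b → F b = 0) (g : κ ↪ ι) :
    ∑ σ : Equiv.Perm ι, F (σ ∘ g)
      = (Fintype.card ι - Fintype.card κ).factorial * ∑ b, F b := by
  have hcard : Fintype.card κ ≤ Fintype.card ι := Fintype.card_le_of_embedding g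
  have hne : ((Fintype.card ι).descFactorial (Fintype.card κ) : R) ≠ 0 :=
    Nat.cast_ne_zero.mpr (Nat.descFactorial_pos.mpr hcard).ne'
  have hemb : ∑ f : κ ↪ ι, F f = ∑ b, F b :=
    Fintype.sum_of_injective _ DFunLike.coe_injective _ _
      (fun b hb => hF b fun hinj => hb ⟨⟨b, hinj⟩, rfl⟩) fun _ => rfl
  refine mul_left_cancel₀ hne ((descFactorial_mul_sum_perm_comp (fun f => F f) g).trans ?_)
  rw [hemb, ← mul_assoc, ← Nat.cast_mul, mul_comm (Nat.descFactorial _ _),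
    Nat.factorial_mul_descFactorial hcard]

end Counting

section Alternating

variable {κ ι R S : Type*} [Fintype κ] [DecidableEq κ] [CommRing R] [CommRing S]

/-- A function of `κ`-tuples of indices is alternating if permuting the tuple multiplies the value
by the sign of the permutation. Such functions are the component arrays of alternating forms. -/
def IsAlternating (A : (κ → ι) → R) : Prop :=
  ∀ (b : κ → ι) (π : Equiv.Perm κ), A (b ∘ π) = (Equiv.Perm.sign π : ℤ) * A b

theorem coe_sign_mul_coe_sign (π : Equiv.Perm κ) :
    ((Equiv.Perm.sign π : ℤ) : R) * ((Equiv.Perm.sign π : ℤ) : R) = 1 := by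
  rw [← Int.cast_mul, Int.isUnit_mul_self (Units.isUnit _), Int.cast_one]

theorem IsAlternating.map {A : (κ → ι) → R} (hA : IsAlternating A) (f : R →+* S) :
    IsAlternating fun b => f (A b) := fun b π => by
  simp only [hA b π, map_mul, map_intCast]

theorem IsAlternating.of_adjacent_swap {n : ℕ} {A : (Fin (n + 1) → ι) → R}
    (h : ∀ b (i : Fin n), A (b ∘ Equiv.swap i.castSucc i.succ) = -A b) : IsAlternating A := by
  intro b π
  have hπ : π ∈ Submonoid.closure
      (Set.range fun i : Fin n => Equiv.swap i.castSucc i.succ) := by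
    rw [Equiv.Perm.mclosure_swap_castSucc_succ]
    trivial
  induction hπ using Submonoid.closure_induction generalizing b with
  | mem x hx =>
    obtain ⟨i, rfl⟩ := hx
    simp [h, Equiv.Perm.sign_swap (Fin.castSucc_lt_succ (i := i)).ne]
  | one => simp
  | mul x y _ _ ihx ihy =>
    rw [Equiv.Perm.coe_mul, ← Function.comp_assoc, ihy, ihx, Equiv.Perm.sign_mul, Units.val_mul,
      Int.cast_mul, ← mul_assoc, mul_comm ((Equiv.Perm.sign y : ℤ) : R)]

theorem IsAlternating.eq_zero_of_not_injective [CharZero R] [NoZeroDivisors R] {A : (κ → ι) → R}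
    (hA : IsAlternating A) {b : κ → ι} (hb : ¬ Function.Injective b) : A b = 0 := by
  obtain ⟨i, j, hij, hne⟩ := Function.not_injective_iff.mp hb
  have hswap : b ∘ Equiv.swap i j = b := by
    rw [Equiv.comp_swap_eq_update, hij, Function.update_eq_self, ← hij, Function.update_eq_self]
  have hneg := hA b (Equiv.swap i j)
  rw [hswap, Equiv.Perm.sign_swap hne] at hneg
  exact self_eq_neg.mp (by simpa using hneg)

theorem isAlternating_sum_sign_mul_comp (F : (κ → ι) → R) :
    IsAlternating fun b => ∑ σ : Equiv.Perm κ, ((Equiv.Perm.sign σ : ℤ) : R) * F (b ∘ σ) := by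
  intro b π
  beta_reduce
  rw [← Equiv.sum_comp (Equiv.mulLeft π) fun σ => ((Equiv.Perm.sign σ : ℤ) : R) * F (b ∘ σ),
    Finset.mul_sum]
  refine Finset.sum_congr rfl fun σ _ => ?_
  rw [Equiv.coe_mulLeft, Equiv.Perm.sign_mul, Units.val_mul, Int.cast_mul, ← mul_assoc,
    ← mul_assoc, coe_sign_mul_coe_sign, one_mul, Function.comp_assoc, Equiv.Perm.coe_mul]

variable [Fintype ι] [DecidableEq ι]

theorem IsAlternating.sum_mul_det {A : (κ → ι) → R} (hA : IsAlternating A) (i : κ → ι) :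
    ∑ b, A b * (Matrix.of fun r s => if i r = b s then (1 : R) else 0).det
      = (Fintype.card κ).factorial * A i := by
  have hprod (π : Equiv.Perm κ) (b : κ → ι) :
      (∏ s, if i (π s) = b s then (1 : R) else 0) = if b = i ∘ π then 1 else 0 := by
    rw [Fintype.prod_boole]
    exact if_congr ⟨fun h => funext fun s => (h s).symm, fun h s => (congrFun h s).symm⟩ rfl rfl
  calc ∑ b, A b * (Matrix.of fun r s => if i r = b s then (1 : R) else 0).det
      = ∑ π : Equiv.Perm κ, ((Equiv.Perm.sign π : ℤ) : R) * A (i ∘ π) := by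
        simp only [Matrix.det_apply', Matrix.of_apply, hprod, Finset.mul_sum]
        rw [Finset.sum_comm]
        simp [mul_comm]
    _ = ∑ _π : Equiv.Perm κ, A i :=
        Finset.sum_congr rfl fun π _ => by rw [hA, ← mul_assoc, coe_sign_mul_coe_sign, one_mul]
    _ = (Fintype.card κ).factorial * A i := by
        rw [Finset.sum_const, Finset.card_univ, Fintype.card_perm, nsmul_eq_mul]

end Alternating

section TupleSums

variable {ι R : Type*} [Fintype ι] [AddCommMonoid R]

theorem sum_fin_succ_arrow {n : ℕ} (F : (Fin (n + 1) → ι) → R) :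
    ∑ b, F b = ∑ x, ∑ b : Fin n → ι, F (Fin.cons x b) := by
  rw [← (Fin.consEquiv fun _ => ι).sum_comp, Fintype.sum_prod_type]
  rfl

theorem sum_fin_two_arrow (F : (Fin 2 → ι) → R) : ∑ b, F b = ∑ i, ∑ j, F ![i, j] := by
  simp only [sum_fin_succ_arrow, Fintype.sum_unique]
  rfl

theorem sum_fin_four_arrow (F : (Fin 4 → ι) → R) :
    ∑ b, F b = ∑ i, ∑ j, ∑ k, ∑ l, F ![i, j, k, l] := by
  simp only [sum_fin_succ_arrow, Fintype.sum_unique]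
  rfl

end TupleSums

section StandardForm

/-- The integer components of the basis 3-form `εᵃ ∧ εᵇ ∧ εᶜ`, with the determinant expanded so that
the kernel can evaluate them. -/
def basisThreeFormInt (a b c i j k : Fin 7) : ℤ :=
  let δ (p q r : Fin 7) : ℤ := if a = p ∧ b = q ∧ c = r then 1 else 0
  δ i j k - δ i k j - δ j i k + δ j k i + δ k i j - δ k j i

/-- The components of `φ₀` as integers, on which identities can be decided. -/
def phiInt (i j k : Fin 7) : ℤ :=
  basisThreeFormInt 0 1 2 i j k
    + (basisThreeFormInt 0 3 4 i j k - basisThreeFormInt 0 5 6 i j k)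
    + (basisThreeFormInt 1 3 5 i j k - basisThreeFormInt 1 6 4 i j k)
    + (basisThreeFormInt 2 3 6 i j k - basisThreeFormInt 2 4 5 i j k)

/-- The components of `⋆φ₀` as integers, given by the contraction
`δᵢₖδⱼₗ - δᵢₗδⱼₖ - ∑ₘ φₘᵢⱼφₘₖₗ` of `φ₀` with itself; `psic_eq_intCast` identifies it with the Hodge
star. -/
def psiInt (i j k l : Fin 7) : ℤ :=
  (if i = k ∧ j = l then 1 else 0) - (if i = l ∧ j = k then 1 else 0)
    - ∑ m, phiInt m i j * phiInt m k l

theorem tdet_e (a b c i j k : Fin 7) :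
    tdet a b c (e i) (e j) (e k) = basisThreeFormInt a b c i j k := by
  simp only [tdet, e, PiLp.single_apply, Matrix.det_fin_three, Matrix.of_apply, Matrix.cons_val,
    mul_ite, mul_one, mul_zero, basisThreeFormInt, ite_and, Int.cast_sub, Int.cast_add,
    Int.cast_ite, Int.cast_one, Int.cast_zero]
  grind

theorem phi0c_eq_intCast (i j k : Fin 7) : phi0c i j k = phiInt i j k := by
  simp only [phi0c, phi0, tdet_e, phiInt]
  push_cast
  rfl

theorem phiInt_swap_right (i j k : Fin 7) : phiInt i k j = -phiInt i j k := by
  simp only [phiInt, basisThreeFormInt]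
  ring

theorem phiInt_swap_left (i j k : Fin 7) : phiInt j i k = -phiInt i j k := by
  simp only [phiInt, basisThreeFormInt]
  ring

theorem psiInt_swap_left (i j k l : Fin 7) : psiInt j i k l = -psiInt i j k l := by
  simp only [psiInt, phiInt_swap_right _ i j, neg_mul, Finset.sum_neg_distrib, and_comm]
  ring

theorem psiInt_swap_right (i j k l : Fin 7) : psiInt i j l k = -psiInt i j k l := by
  simp only [psiInt, phiInt_swap_right _ k l, mul_neg, Finset.sum_neg_distrib]
  ring

theorem psiInt_swap_middle : ∀ i j k l : Fin 7, psiInt i k j l = -psiInt i j k l := by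
  decide +kernel

theorem isAlternating_psiInt :
    IsAlternating fun b : Fin 4 → Fin 7 => psiInt (b 0) (b 1) (b 2) (b 3) := by
  refine IsAlternating.of_adjacent_swap fun b i => ?_
  fin_cases i
  · exact psiInt_swap_left (b 0) (b 1) (b 2) (b 3)
  · exact psiInt_swap_middle (b 0) (b 1) (b 2) (b 3)
  · exact psiInt_swap_right (b 0) (b 1) (b 2) (b 3)

theorem exists_phiInt_eq_ite :
    ∀ k : Fin 7, ∃ i j, ∀ l, phiInt l i j = if l = k then 1 else 0 := by
  decide +kernel

open Equiv.Perm

theorem sign_mul_phiInt_decomposeFin : ∀ (p : Fin 7) (q : Fin 6) (r : Fin 5),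
    let σ : Equiv.Perm (Fin 7) :=
      decomposeFin.symm (p, decomposeFin.symm (q, decomposeFin.symm (r, 1)))
    (sign σ : ℤ) * phiInt (σ 0) (σ 1) (σ 2) = psiInt (σ 3) (σ 4) (σ 5) (σ 6) := by
  decide +kernel

-- Both sides are alternating in the last four places, so one `σ` for each choice of the first three
-- values suffices.
theorem sign_mul_phiInt_eq_psiInt (σ : Equiv.Perm (Fin 7)) :
    (sign σ : ℤ) * phiInt (σ 0) (σ 1) (σ 2) = psiInt (σ 3) (σ 4) (σ 5) (σ 6) := by
  obtain ⟨⟨p, σ₁⟩, rfl⟩ := decomposeFin.symm.surjective σ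
  obtain ⟨⟨q, σ₂⟩, rfl⟩ := decomposeFin.symm.surjective σ₁
  obtain ⟨⟨r, ρ⟩, rfl⟩ := decomposeFin.symm.surjective σ₂
  set τ : Equiv.Perm (Fin 7) :=
    decomposeFin.symm (p, decomposeFin.symm (q, decomposeFin.symm (r, 1))) with hτ
  set σ : Equiv.Perm (Fin 7) :=
    decomposeFin.symm (p, decomposeFin.symm (q, decomposeFin.symm (r, ρ))) with hσ
  have hsign : (sign σ : ℤ) = sign ρ * sign τ := by
    simp only [hσ, hτ, decomposeFin.symm_sign, Equiv.Perm.sign_one]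
    push_cast
    ring
  have happly (x : Fin 4) : σ x.succ.succ.succ = τ (ρ x).succ.succ.succ := by
    simp only [hσ, hτ, decomposeFin_symm_apply_succ, one_apply]
  have hhead₀ : σ 0 = τ 0 := by simp [hσ, hτ]
  have hhead₁ : σ 1 = τ 1 := by
    rw [← Fin.succ_zero_eq_one]
    simp only [hσ, hτ, decomposeFin_symm_apply_succ, decomposeFin_symm_apply_zero]
  have hhead₂ : σ 2 = τ 2 := by
    rw [← Fin.succ_one_eq_two, ← Fin.succ_zero_eq_one]
    simp only [hσ, hτ, decomposeFin_symm_apply_succ, decomposeFin_symm_apply_zero]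
  calc (sign σ : ℤ) * phiInt (σ 0) (σ 1) (σ 2)
      = sign ρ * (sign τ * phiInt (τ 0) (τ 1) (τ 2)) := by
        rw [hsign, mul_assoc, hhead₀, hhead₁, hhead₂]
    _ = sign ρ * psiInt (τ 3) (τ 4) (τ 5) (τ 6) := by rw [sign_mul_phiInt_decomposeFin]
    _ = psiInt (σ 3) (σ 4) (σ 5) (σ 6) := by
        refine (isAlternating_psiInt (fun x : Fin 4 => τ x.succ.succ.succ) ρ).symm.trans ?_
        simp only [Function.comp, ← happly]
        rfl

end StandardForm

section G2

open Equiv.Perm (decomposeFin sign)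

theorem sign_mul_phi0c_eq_intCast (σ : Equiv.Perm (Fin 7)) :
    ((sign σ : ℤ) : ℝ) * phi0c (σ 0) (σ 1) (σ 2) = psiInt (σ 3) (σ 4) (σ 5) (σ 6) := by
  rw [phi0c_eq_intCast, ← sign_mul_phiInt_eq_psiInt, Int.cast_mul]

theorem phi0c_swap_right (i j k : Fin 7) : phi0c i k j = -phi0c i j k := by
  simp only [phi0c_eq_intCast, phiInt_swap_right i j k, Int.cast_neg]

theorem phi0c_swap_left (i j k : Fin 7) : phi0c j i k = -phi0c i j k := by
  simp only [phi0c_eq_intCast, phiInt_swap_left i j k, Int.cast_neg]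

theorem phi0c_self_left (i j : Fin 7) : phi0c i i j = 0 :=
  self_eq_neg.mp (phi0c_swap_left i i j)

theorem phi0c_self_outer (i j : Fin 7) : phi0c i j i = 0 := by
  rw [phi0c_swap_right, phi0c_self_left, neg_zero]

theorem phi0c_self_right (i j : Fin 7) : phi0c i j j = 0 :=
  self_eq_neg.mp (phi0c_swap_right i j j)

theorem bf4_eq_det (i b : Fin 4 → Fin 7) :
    bf4 (i 0) (i 1) (i 2) (i 3) (b 0) (b 1) (b 2) (b 3)
      = (Matrix.of fun r s => if i r = b s then (1 : ℝ) else 0).det := by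
  rw [bf4]
  congr 1
  ext r s
  fin_cases r <;> fin_cases s <;> rfl

theorem psic_eq_intCast (i j k l : Fin 7) : psic i j k l = psiInt i j k l := by
  set A : (Fin 4 → Fin 7) → ℝ := fun b => psiInt (b 0) (b 1) (b 2) (b 3)
  have hA : IsAlternating A := isAlternating_psiInt.map (Int.castRingHom ℝ)
  have hcount := sum_perm_comp_embedding
    (F := fun b => A b * bf4 i j k l (b 0) (b 1) (b 2) (b 3))
    (fun b hb => mul_eq_zero_of_left (hA.eq_zero_of_not_injective hb) _) (Fin.natAddEmb 3)
  have hdet := hA.sum_mul_det ![i, j, k, l]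
  simp only [← bf4_eq_det] at hdet
  calc psic i j k l
      = 1 / 144 * ∑ σ : Equiv.Perm (Fin 7),
          A (σ ∘ Fin.natAddEmb 3) * bf4 i j k l (σ 3) (σ 4) (σ 5) (σ 6) := by
        simp only [psic, sign_mul_phi0c_eq_intCast]
        rfl
    _ = 1 / 144 * ((Nat.factorial 3 : ℕ) * ((Nat.factorial 4 : ℕ) * A ![i, j, k, l])) := by
        exact congrArg (1 / 144 * ·) (hcount.trans (congrArg _ hdet))
    _ = psiInt i j k l := by
        simp only [A, Nat.factorial, Matrix.cons_val]
        push_cast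
        ring

theorem psic_eq_sub_sum (i j k l : Fin 7) :
    psic i j k l = (if i = k ∧ j = l then 1 else 0) - (if i = l ∧ j = k then 1 else 0)
      - ∑ m, phi0c m i j * phi0c m k l := by
  simp only [psic_eq_intCast, psiInt, phi0c_eq_intCast]
  push_cast
  rfl

theorem psic_swap_right (i j k l : Fin 7) : psic i j l k = -psic i j k l := by
  simp only [psic_eq_intCast, psiInt_swap_right i j k l, Int.cast_neg]

theorem isAlternating_psic :
    IsAlternating fun b : Fin 4 → Fin 7 => psic (b 0) (b 1) (b 2) (b 3) := by
  simp only [psic_eq_intCast]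
  exact isAlternating_psiInt.map (Int.castRingHom ℝ)

theorem sign_mul_phi0c_eq_psic (σ : Equiv.Perm (Fin 7)) :
    ((sign σ : ℤ) : ℝ) * phi0c (σ 0) (σ 1) (σ 2) = psic (σ 3) (σ 4) (σ 5) (σ 6) := by
  rw [sign_mul_phi0c_eq_intCast, psic_eq_intCast]

/-- The contraction of `φ₀` with a 2-form `α`, with components `½ ∑ φ₀(k, i, j) α(i, j)`. Its
vanishing characterizes the component `Λ²₁₄`. -/
def phiContract (α : Fin 7 → Fin 7 → ℝ) (k : Fin 7) : ℝ :=
  (1 / 2) * ∑ i, ∑ j, phi0c k i j * α i j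

theorem Lop_eq_sum_psic_mul (α : Fin 7 → Fin 7 → ℝ) (i j : Fin 7) :
    Lop α i j = (1 / 2) * ∑ k, ∑ l, psic k l i j * α k l := by
  have hbf (k l : Fin 7) : ∑ p, ∑ q, psic k l p q * α k l * bf i j p q
      = 2 * (psic k l i j * α k l) := by
    simp only [bf, ite_and, mul_sub, mul_ite, mul_one, mul_zero, Finset.sum_sub_distrib,
      Finset.sum_ite_eq', Finset.sum_ite_irrel, Finset.sum_const_zero, Finset.mem_univ, if_true,
      psic_swap_right k l i j]
    ring
  calc Lop α i j
      = 1 / 24 * ∑ σ : Equiv.Perm (Fin 7),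
          psic (σ 3) (σ 4) (σ 5) (σ 6) * α (σ 3) (σ 4) * bf i j (σ 5) (σ 6) := by
        simp only [Lop, sign_mul_phi0c_eq_psic]
    _ = 1 / 24 * ((Nat.factorial 3 : ℕ) * ∑ b : Fin 4 → Fin 7,
          psic (b 0) (b 1) (b 2) (b 3) * α (b 0) (b 1) * bf i j (b 2) (b 3)) := by
        refine congrArg (1 / 24 * ·) (sum_perm_comp_embedding (F := fun b : Fin 4 → Fin 7 =>
          psic (b 0) (b 1) (b 2) (b 3) * α (b 0) (b 1) * bf i j (b 2) (b 3))
          (fun b hb => ?_) (Fin.natAddEmb 3))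
        rw [isAlternating_psic.eq_zero_of_not_injective hb, zero_mul, zero_mul]
    _ = 1 / 24 * ((Nat.factorial 3 : ℕ) * ∑ k, ∑ l, 2 * (psic k l i j * α k l)) := by
        simp only [sum_fin_four_arrow, ← hbf]
        rfl
    _ = 1 / 2 * ∑ k, ∑ l, psic k l i j * α k l := by
        simp only [← Finset.mul_sum, Nat.factorial]
        push_cast
        ring

theorem Lop_eq_sub_sum (α : Fin 7 → Fin 7 → ℝ) (i j : Fin 7) :
    Lop α i j = (1 / 2) * (α i j - α j i) - ∑ m, phi0c m i j * phiContract α m := by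
  have hdelta (p q : Fin 7) :
      ∑ k, ∑ l, (if k = p ∧ l = q then (1 : ℝ) else 0) * α k l = α p q := by
    simp [ite_and]
  have hphi : ∑ k, ∑ l, (∑ m, phi0c m k l * phi0c m i j) * α k l
      = 2 * ∑ m, phi0c m i j * phiContract α m := by
    simp only [phiContract, Finset.sum_mul, Finset.mul_sum]
    rw [Finset.sum_comm_cycle]
    refine Fintype.sum_congr _ _ fun m => Fintype.sum_congr _ _ fun k => Fintype.sum_congr _ _
      fun l => ?_
    ring
  simp only [Lop_eq_sum_psic_mul, psic_eq_sub_sum, sub_mul, Finset.sum_sub_distrib, hdelta, hphi]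
  ring

theorem exists_phi0c_eq_ite (k : Fin 7) : ∃ i j, ∀ l, phi0c l i j = if l = k then 1 else 0 := by
  obtain ⟨i, j, h⟩ := exists_phiInt_eq_ite k
  exact ⟨i, j, fun l => by rw [phi0c_eq_intCast, h, Int.cast_ite, Int.cast_one, Int.cast_zero]⟩

theorem Lop_eq_self_iff {α : Fin 7 → Fin 7 → ℝ} (hα : Alt2 α) :
    (∀ i j, Lop α i j = α i j) ↔ ∀ k, phiContract α k = 0 := by
  have hLop (i j : Fin 7) : Lop α i j = α i j - ∑ m, phi0c m i j * phiContract α m := by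
    rw [Lop_eq_sub_sum, hα i j]
    ring
  refine ⟨fun h k => ?_, fun h i j => by simp [hLop, h]⟩
  obtain ⟨i, j, hij⟩ := exists_phi0c_eq_ite k
  simpa [hLop, hij] using h i j

theorem psic_comp_succ (τ : Equiv.Perm (Fin 7)) (σ : Equiv.Perm (Fin 6)) :
    psic (τ (σ 0).succ) (τ (σ 1).succ) (τ (σ 2).succ) (τ (σ 3).succ)
      = ((sign σ : ℤ) : ℝ) * (sign τ : ℤ) * phi0c (τ 0) (τ (σ 4).succ) (τ (σ 5).succ) := by
  set ρ : Equiv.Perm (Fin 7) := τ * decomposeFin.symm (0, σ * finRotate 6 ^ 4) with hρ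
  have hzero : ρ 0 = τ 0 := by simp [hρ]
  have hsucc (x : Fin 6) : ρ x.succ = τ (σ ((finRotate 6 ^ 4) x)).succ := by simp [hρ]
  have hsign : ((sign ρ : ℤ) : ℝ) = (sign σ : ℤ) * (sign τ : ℤ) := by
    have hrot : sign (finRotate 6 ^ 4) = 1 := by decide
    simp [hρ, decomposeFin.symm_sign, hrot, mul_comm]
  have hHodge : (sign ρ : ℤ) * phi0c (ρ 0) (ρ (Fin.succ 0)) (ρ (Fin.succ 1))
      = psic (ρ (Fin.succ 2)) (ρ (Fin.succ 3)) (ρ (Fin.succ 4)) (ρ (Fin.succ 5)) :=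
    sign_mul_phi0c_eq_psic ρ
  rw [hsign, hzero] at hHodge
  simp only [hsucc] at hHodge
  exact hHodge.symm

theorem sum_phi0c_comp_succ_mul (α : Fin 7 → Fin 7 → ℝ) (τ : Equiv.Perm (Fin 7)) :
    ∑ x : Fin 6, ∑ y : Fin 6, phi0c (τ 0) (τ x.succ) (τ y.succ) * α (τ x.succ) (τ y.succ)
      = 2 * phiContract α (τ 0) := by
  calc _ = ∑ i, ∑ j, phi0c (τ 0) (τ i) (τ j) * α (τ i) (τ j) := by
        simp only [Fin.sum_univ_succ (n := 6), phi0c_self_left, phi0c_self_outer, zero_mul,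
          Finset.sum_const_zero, zero_add]
    _ = ∑ i, ∑ j, phi0c (τ 0) i j * α i j := by
        rw [← Equiv.sum_comp τ fun i => ∑ j, phi0c (τ 0) i j * α i j]
        exact Fintype.sum_congr _ _ fun i =>
          Equiv.sum_comp τ fun j => phi0c (τ 0) (τ i) j * α (τ i) j
    _ = 2 * phiContract α (τ 0) := by
        rw [phiContract]
        ring

theorem starPhiWedge_comp_succ (α : Fin 7 → Fin 7 → ℝ) (τ : Equiv.Perm (Fin 7)) :
    starPhiWedge α (τ ∘ Fin.succ) = 48 * (sign τ : ℤ) * phiContract α (τ 0) := by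
  set G : (Fin 2 → Fin 6) → ℝ := fun b =>
    phi0c (τ 0) (τ (b 0).succ) (τ (b 1).succ) * α (τ (b 0).succ) (τ (b 1).succ) with hG
  have hdiag (b : Fin 2 → Fin 6) (hb : ¬ Function.Injective b) : G b = 0 := by
    have hb' : b 0 = b 1 := by
      rw [← List.nodup_ofFn] at hb
      simpa [List.ofFn_succ] using hb
    simp only [hG, hb', phi0c_self_right, zero_mul]
  calc starPhiWedge α (τ ∘ Fin.succ)
      = ∑ σ : Equiv.Perm (Fin 6), (sign τ : ℤ) * G (σ ∘ Fin.natAddEmb 4) := by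
        refine Fintype.sum_congr _ _ fun σ => ?_
        simp only [Function.comp_apply]
        rw [psic_comp_succ, ← mul_assoc, ← mul_assoc, coe_sign_mul_coe_sign,
          one_mul, mul_assoc]
        rfl
    _ = (sign τ : ℤ) * ((Nat.factorial 4 : ℕ) * (2 * phiContract α (τ 0))) := by
        rw [← Finset.mul_sum, ← sum_phi0c_comp_succ_mul]
        exact congrArg (_ * ·) ((sum_perm_comp_embedding hdiag (Fin.natAddEmb 4)).trans
          (congrArg _ (sum_fin_two_arrow G)))
    _ = 48 * (sign τ : ℤ) * phiContract α (τ 0) := by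
        simp only [Nat.factorial]
        push_cast
        ring

theorem isAlternating_starPhiWedge (α : Fin 7 → Fin 7 → ℝ) : IsAlternating (starPhiWedge α) := by
  refine cast (congrArg IsAlternating (funext fun a => ?_)) (isAlternating_sum_sign_mul_comp
    fun b : Fin 6 → Fin 7 => psic (b 0) (b 1) (b 2) (b 3) * α (b 4) (b 5))
  simp only [starPhiWedge, mul_assoc, Function.comp]

theorem starPhiWedge_eq_zero_iff (α : Fin 7 → Fin 7 → ℝ) :
    (∀ a, starPhiWedge α a = 0) ↔ ∀ k, phiContract α k = 0 := by
  refine ⟨fun h k => ?_, fun h a => ?_⟩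
  · have hk := starPhiWedge_comp_succ α (Equiv.swap 0 k)
    rw [h, Equiv.swap_apply_left] at hk
    simpa using hk.symm
  · by_cases ha : Function.Injective a
    · obtain ⟨τ, hτ⟩ := Equiv.Perm.exists_extending_pair Fin.succ a (Fin.succ_injective 6) ha
      rw [← funext hτ, ← Function.comp_def, starPhiWedge_comp_succ, h, mul_zero]
    · exact (isAlternating_starPhiWedge α).eq_zero_of_not_injective ha

end G2

/-- the eigenspace Λ²₁₄ = {α : ⋆(φ₀∧α) = α} coincides with the
kernel of α ↦ (⋆φ₀) ∧ α. -/
theorem stmt12 (α : Fin 7 → Fin 7 → ℝ) (hα : Alt2 α) :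
    (∀ i j, Lop α i j = α i j) ↔ (∀ a : Fin 6 → Fin 7, starPhiWedge α a = 0) := by
  exact (Lop_eq_self_iff hα).trans (starPhiWedge_eq_zero_iff α).symm
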